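/- Let t ≥ 0, λ > 0, β ≥ 0 and let μℓ, μs be real numbers. Set m(v) := (1−exp(−βv))·μℓ + exp(−βv)·μs. Then λ²·∫₀ᵗ ∫₀^{t−y} exp(−λ(y+v))·m(y)·m(v)·((λ(t−y−v)+2)² − 2) dv dy = μℓ²·(B₀₀ − 2·B₀β + Bββ) + 2·μℓ·μs·(B₀β − Bββ) + μs²·Bββ, where B₀₀ := t²λ², B₀β := −2βλ²/(β+λ)³ + 2tβλ²/(β+λ)² + t²λ³/(β+λ) + (2βλ²/(β+λ)³)·exp(−t(β+λ)), and Bββ := 2βλ²(β−2λ)/(β+λ)⁴ + 4tβλ³/(β+λ)³ + t²λ⁴/(β+λ)² − (2βλ²·(−2λ + β·(1 + t(β+λ)))/(β+λ)⁴)·exp(−t(β+λ)). -/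

import Mathlib

open MeasureTheory Real

/-!
Write `w(v) = e^{-λv} m(v) = μℓ e^{-λv} + (μs - μℓ) e^{-(β+λ)v}`. The double integral convolves the
kernel `f(x) = (λx + 2)² - 2` twice with `w`. With `T_a` denoting convolution with `e^{-ax}`, it is
therefore a quadratic form in `(μℓ, μs - μℓ)` whose coefficients are `T_λ T_λ f`,
`T_λ T_{β+λ} f = T_{β+λ} T_λ f` and `T_{β+λ} T_{β+λ} f`; multiplied by `λ²`, these are
`B₀₀`, `B₀β` and `Bββ`. Each `T_a f` is the solution of `u' = f - a u`, `u(0) = 0`, so the closed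
forms are verified by differentiation.
-/

lemma hasDerivAt_exp_neg_mul (a x : ℝ) :
    HasDerivAt (fun x ↦ exp (-(a * x))) (-(a * exp (-(a * x)))) x :=
  ((hasDerivAt_id x).const_mul a).neg.exp.congr_deriv (by simp [mul_comm])

section ExpConv

variable {E : Type*} [NormedAddCommGroup E] [NormedSpace ℝ E]

/-- The convolution `s ↦ ∫₀ˢ e^{-av} f(s - v) dv` of `f` with the exponential `e^{-a·}`, as an
oriented interval integral, so that negative `s` is allowed. It is the solution operator of the
initial value problem `u' = f - a u`, `u 0 = 0`. -/
noncomputable def expConv (a : ℝ) (f : ℝ → E) (s : ℝ) : E :=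
  ∫ v in (0 : ℝ)..s, exp (-(a * v)) • f (s - v)

variable {a b p q s : ℝ} {f g : ℝ → E}

lemma continuous_expConv (hf : Continuous f) : Continuous (expConv a f) :=
  intervalIntegral.continuous_parametric_intervalIntegral_of_continuous
    (by fun_prop) continuous_id

lemma integral_add_exp_smul_comp_sub (hf : Continuous f) :
    ∫ v in (0 : ℝ)..s, (p * exp (-(a * v)) + q * exp (-(b * v))) • f (s - v)
      = p • expConv a f s + q • expConv b f s := by
  simp_rw [add_smul, mul_smul]
  rw [intervalIntegral.integral_add (Continuous.intervalIntegrable (by fun_prop) _ _)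
      (Continuous.intervalIntegrable (by fun_prop) _ _),
    intervalIntegral.integral_smul, intervalIntegral.integral_smul]
  rfl

lemma expConv_smul (a p : ℝ) (f : ℝ → E) : expConv a (p • f) = p • expConv a f := by
  funext s
  simp only [expConv, Pi.smul_apply, smul_comm _ p, intervalIntegral.integral_smul]

lemma expConv_add (hf : Continuous f) (hg : Continuous g) :
    expConv a (f + g) = expConv a f + expConv a g := by
  funext s
  simp only [expConv, Pi.add_apply, smul_add]
  exact intervalIntegral.integral_add (Continuous.intervalIntegrable (by fun_prop) _ _)
    (Continuous.intervalIntegrable (by fun_prop) _ _)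

lemma expConv_eq_exp_smul_integral (a : ℝ) (f : ℝ → E) (s : ℝ) :
    expConv a f s = exp (-(a * s)) • ∫ x in (0 : ℝ)..s, exp (a * x) • f x := by
  have hsub := intervalIntegral.integral_comp_sub_left (a := 0) (b := s)
    (fun x ↦ exp (-(a * s)) • exp (a * x) • f x) s
  rw [sub_self, sub_zero] at hsub
  rw [← intervalIntegral.integral_smul, ← hsub]
  refine intervalIntegral.integral_congr fun v _ ↦ ?_
  simp only [smul_smul, ← exp_add]
  congr 2
  ring

lemma hasDerivAt_expConv [CompleteSpace E] (hf : Continuous f) :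
    HasDerivAt (expConv a f) (f s - a • expConv a f s) s := by
  have hint : HasDerivAt (fun s ↦ ∫ x in (0 : ℝ)..s, exp (a * x) • f x) (exp (a * s) • f s) s :=
    Continuous.integral_hasStrictDerivAt (by fun_prop) 0 s |>.hasDerivAt
  rw [funext (expConv_eq_exp_smul_integral a f)]
  refine ((hasDerivAt_exp_neg_mul a s).smul hint).congr_deriv ?_
  rw [smul_smul, ← exp_add, neg_add_cancel, exp_zero]
  module

lemma expConv_eq_of_hasDerivAt [CompleteSpace E] {u : ℝ → E} (hf : Continuous f)
    (hu : ∀ x, HasDerivAt u (f x - a • u x) x) (hu₀ : u 0 = 0) : expConv a f = u := by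
  funext s
  have hderiv (v : ℝ) :
      HasDerivAt (fun v ↦ -(exp (-(a * v)) • u (s - v))) (exp (-(a * v)) • f (s - v)) v := by
    have hcomp : HasDerivAt (fun v ↦ u (s - v)) (-(f (s - v) - a • u (s - v))) v :=
      (hu (s - v)).comp_const_sub s v
    exact ((hasDerivAt_exp_neg_mul a v).smul hcomp).neg.congr_deriv (by module)
  rw [expConv, intervalIntegral.integral_eq_sub_of_hasDerivAt (fun v _ ↦ hderiv v)
    (Continuous.intervalIntegrable (by fun_prop) _ _)]
  simp [hu₀]

@[simp]
lemma expConv_apply_zero (a : ℝ) (f : ℝ → E) : expConv a f 0 = 0 :=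
  intervalIntegral.integral_same

/- The resolvent identity `T_a - T_b = (b - a) T_b T_a`: the left-hand side `w` satisfies
`w' = (b - a) T_a f - b w`. -/
lemma expConv_sub_expConv [CompleteSpace E] (a b : ℝ) (hf : Continuous f) :
    expConv a f - expConv b f = (b - a) • expConv b (expConv a f) := by
  rw [← expConv_smul]
  refine (expConv_eq_of_hasDerivAt ((continuous_expConv hf).const_smul _) (fun x ↦ ?_)
    (by simp)).symm
  refine ((hasDerivAt_expConv hf).sub (hasDerivAt_expConv hf)).congr_deriv ?_
  simp only [Pi.sub_apply, Pi.smul_apply]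
  module

lemma expConv_comm [CompleteSpace E] (a b : ℝ) (hf : Continuous f) :
    expConv a (expConv b f) = expConv b (expConv a f) := by
  refine expConv_eq_of_hasDerivAt (continuous_expConv hf) (fun x ↦ ?_) (expConv_apply_zero _ _)
  refine (hasDerivAt_expConv (continuous_expConv hf)).congr_deriv ?_
  have hres : expConv a f x - expConv b f x = (b - a) • expConv b (expConv a f) x :=
    congrFun (expConv_sub_expConv a b hf) x
  rw [eq_add_of_sub_eq hres]
  module

lemma integral_integral_add_exp_smul_comp_sub [CompleteSpace E] (hf : Continuous f) :
    ∫ y in (0 : ℝ)..s, ∫ v in (0 : ℝ)..(s - y),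
        ((p * exp (-(a * y)) + q * exp (-(b * y))) *
          (p * exp (-(a * v)) + q * exp (-(b * v)))) • f (s - y - v)
      = p ^ 2 • expConv a (expConv a f) s
        + (2 * p * q) • expConv a (expConv b f) s
        + q ^ 2 • expConv b (expConv b f) s := by
  have hTa : Continuous (expConv a f) := continuous_expConv hf
  have hTb : Continuous (expConv b f) := continuous_expConv hf
  simp_rw [mul_smul _ _ (f _), intervalIntegral.integral_smul, integral_add_exp_smul_comp_sub hf]
  refine (integral_add_exp_smul_comp_sub (f := p • expConv a f + q • expConv b f)
    ((hTa.const_smul p).add (hTb.const_smul q))).trans ?_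
  rw [expConv_add (hTa.const_smul p) (hTb.const_smul q),
    expConv_add (hTa.const_smul p) (hTb.const_smul q)]
  simp only [expConv_smul, expConv_comm b a hf, Pi.add_apply, Pi.smul_apply]
  module

end ExpConv

section QuadKernel

lemma hasDerivAt_quadratic_add_affine_mul_exp (c k₀ k₁ k₂ l₀ l₁ x : ℝ) :
    HasDerivAt (fun x ↦ k₂ * x ^ 2 + k₁ * x + k₀ + (l₁ * x + l₀) * exp (-(c * x)))
      (2 * k₂ * x + k₁ + (l₁ - c * (l₁ * x + l₀)) * exp (-(c * x))) x := by
  have hquad : HasDerivAt (fun x ↦ k₂ * x ^ 2 + k₁ * x + k₀) (2 * k₂ * x + k₁) x :=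
    ((((hasDerivAt_pow 2 x).const_mul k₂).add
      ((hasDerivAt_id x).const_mul k₁)).add_const k₀).congr_deriv (by norm_num; ring)
  have haff : HasDerivAt (fun x ↦ l₁ * x + l₀) l₁ x := by
    simpa using ((hasDerivAt_id x).const_mul l₁).add_const l₀
  exact (hquad.add (haff.mul (hasDerivAt_exp_neg_mul c x))).congr_deriv (by ring)

/- Matching coefficients in `u' = f - a u` for
`u x = k₂ x² + k₁ x + k₀ + (l₁ x + l₀) e^{-cx}` and `f` of the same shape. -/
lemma expConv_eq_quadratic_add_affine_mul_exp {a c : ℝ} {f : ℝ → ℝ} (k₀ k₁ k₂ l₀ l₁ : ℝ)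
    (hf : ∀ x, f x = a * k₂ * x ^ 2 + (2 * k₂ + a * k₁) * x + (k₁ + a * k₀)
      + ((a - c) * l₁ * x + (l₁ + (a - c) * l₀)) * exp (-(c * x)))
    (h₀ : k₀ + l₀ = 0) :
    expConv a f = fun x ↦ k₂ * x ^ 2 + k₁ * x + k₀ + (l₁ * x + l₀) * exp (-(c * x)) := by
  have hcont : Continuous f := by
    rw [funext hf]
    fun_prop
  refine expConv_eq_of_hasDerivAt hcont (fun x ↦ ?_) (by simpa using h₀)
  refine (hasDerivAt_quadratic_add_affine_mul_exp c k₀ k₁ k₂ l₀ l₁ x).congr_deriv ?_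
  rw [hf, smul_eq_mul]
  ring

/-- The kernel `(λx + 2)² - 2` of the double integral; it equals `E[(N + 1)(N + 2)]` for a Poisson
variable `N` of mean `λx`. -/
def quadKernel (lam x : ℝ) : ℝ :=
  (lam * x + 2) ^ 2 - 2

variable {lam β : ℝ}

lemma continuous_quadKernel : Continuous (quadKernel lam) := by
  unfold quadKernel
  fun_prop

lemma expConv_self_quadKernel :
    expConv lam (quadKernel lam) = fun x ↦ lam * x ^ 2 + 2 * x := by
  rw [expConv_eq_quadratic_add_affine_mul_exp (c := 0) 0 2 lam 0 0
    (fun x ↦ by rw [quadKernel]; ring) (by ring)]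
  funext x
  ring

lemma expConv_self_expConv_self_quadKernel :
    expConv lam (expConv lam (quadKernel lam)) = fun x ↦ x ^ 2 := by
  rw [expConv_self_quadKernel,
    expConv_eq_quadratic_add_affine_mul_exp (c := 0) 0 0 1 0 0 (fun x ↦ by ring) (by ring)]
  funext x
  ring

lemma expConv_shift_quadKernel (hc : β + lam ≠ 0) :
    expConv (β + lam) (quadKernel lam) = fun x ↦
      lam ^ 2 / (β + lam) * x ^ 2 + 2 * lam * (2 * β + lam) / (β + lam) ^ 2 * x
        + 2 * β ^ 2 / (β + lam) ^ 3 - 2 * β ^ 2 / (β + lam) ^ 3 * exp (-((β + lam) * x)) := by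
  rw [expConv_eq_quadratic_add_affine_mul_exp (c := β + lam) (2 * β ^ 2 / (β + lam) ^ 3)
    (2 * lam * (2 * β + lam) / (β + lam) ^ 2) (lam ^ 2 / (β + lam))
    (-(2 * β ^ 2 / (β + lam) ^ 3)) 0 (fun x ↦ by rw [quadKernel]; field_simp; ring) (by ring)]
  funext x
  ring

lemma expConv_self_expConv_shift_quadKernel (hc : β + lam ≠ 0) :
    expConv lam (expConv (β + lam) (quadKernel lam)) = fun x ↦
      -(2 * β / (β + lam) ^ 3) + 2 * x * β / (β + lam) ^ 2 + x ^ 2 * lam / (β + lam)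
        + 2 * β / (β + lam) ^ 3 * exp (-(x * (β + lam))) := by
  rw [expConv_shift_quadKernel hc, expConv_eq_quadratic_add_affine_mul_exp (c := β + lam)
    (-(2 * β / (β + lam) ^ 3)) (2 * β / (β + lam) ^ 2) (lam / (β + lam))
    (2 * β / (β + lam) ^ 3) 0 (fun x ↦ by field_simp; ring) (by ring)]
  funext x
  ring_nf

lemma expConv_shift_expConv_shift_quadKernel (hc : β + lam ≠ 0) :
    expConv (β + lam) (expConv (β + lam) (quadKernel lam)) = fun x ↦
      2 * β * (β - 2 * lam) / (β + lam) ^ 4 + 4 * x * β * lam / (β + lam) ^ 3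
        + x ^ 2 * lam ^ 2 / (β + lam) ^ 2
        - 2 * β * (-(2 * lam) + β * (1 + x * (β + lam))) / (β + lam) ^ 4 *
          exp (-(x * (β + lam))) := by
  rw [expConv_shift_quadKernel hc, expConv_eq_quadratic_add_affine_mul_exp (c := β + lam)
    (2 * β * (β - 2 * lam) / (β + lam) ^ 4) (4 * β * lam / (β + lam) ^ 3)
    (lam ^ 2 / (β + lam) ^ 2) (-(2 * β * (β - 2 * lam) / (β + lam) ^ 4))
    (-(2 * β ^ 2 / (β + lam) ^ 3)) (fun x ↦ by field_simp; ring) (by ring)]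
  funext x
  rw [mul_comm x (β + lam)]
  field_simp
  ring

end QuadKernel

lemma exp_mul_mixture (lam β μl μs v : ℝ) :
    exp (-(lam * v)) * ((1 - exp (-(β * v))) * μl + exp (-(β * v)) * μs)
      = μl * exp (-(lam * v)) + (μs - μl) * exp (-((β + lam) * v)) := by
  rw [add_mul, neg_add, exp_add]
  ring

theorem stmt_11_general (t lam β μl μs : ℝ) (hc : β + lam ≠ 0)
    (m : ℝ → ℝ)
    (hm : ∀ v, m v = (1 - Real.exp (-(β * v))) * μl + Real.exp (-(β * v)) * μs)
    (B00 B0β Bββ : ℝ)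
    (hB00 : B00 = t ^ 2 * lam ^ 2)
    (hB0β : B0β = -(2 * β * lam ^ 2 / (β + lam) ^ 3)
        + 2 * t * β * lam ^ 2 / (β + lam) ^ 2
        + t ^ 2 * lam ^ 3 / (β + lam)
        + (2 * β * lam ^ 2 / (β + lam) ^ 3) * Real.exp (-(t * (β + lam))))
    (hBββ : Bββ = 2 * β * lam ^ 2 * (β - 2 * lam) / (β + lam) ^ 4
        + 4 * t * β * lam ^ 3 / (β + lam) ^ 3
        + t ^ 2 * lam ^ 4 / (β + lam) ^ 2
        - (2 * β * lam ^ 2 * (-(2 * lam) + β * (1 + t * (β + lam))) / (β + lam) ^ 4) *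
            Real.exp (-(t * (β + lam)))) :
    lam ^ 2 *
        ∫ y in (0:ℝ)..t,
          ∫ v in (0:ℝ)..(t - y),
            Real.exp (-(lam * (y + v))) * m y * m v * ((lam * (t - y - v) + 2) ^ 2 - 2)
      = μl ^ 2 * (B00 - 2 * B0β + Bββ) + 2 * μl * μs * (B0β - Bββ) + μs ^ 2 * Bββ := by
  have hweight (y v : ℝ) : exp (-(lam * (y + v))) * m y * m v
      = (μl * exp (-(lam * y)) + (μs - μl) * exp (-((β + lam) * y))) *
        (μl * exp (-(lam * v)) + (μs - μl) * exp (-((β + lam) * v))) := by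
    rw [hm, hm, ← exp_mul_mixture, ← exp_mul_mixture, mul_add lam, neg_add, exp_add]
    ring
  have hquad := integral_integral_add_exp_smul_comp_sub (a := lam) (b := β + lam) (p := μl)
    (q := μs - μl) (s := t) (continuous_quadKernel (lam := lam))
  simp only [smul_eq_mul, quadKernel, expConv_self_expConv_self_quadKernel,
    expConv_self_expConv_shift_quadKernel hc, expConv_shift_expConv_shift_quadKernel hc] at hquad
  simp_rw [hweight]
  rw [hquad, hB00, hB0β, hBββ]
  ring

theorem stmt_11 (t lam β μl μs : ℝ) (ht : 0 ≤ t) (hlam : 0 < lam) (hβ : 0 ≤ β)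
    (m : ℝ → ℝ)
    (hm : ∀ v, m v = (1 - Real.exp (-(β * v))) * μl + Real.exp (-(β * v)) * μs)
    (B00 B0β Bββ : ℝ)
    (hB00 : B00 = t ^ 2 * lam ^ 2)
    (hB0β : B0β = -(2 * β * lam ^ 2 / (β + lam) ^ 3)
        + 2 * t * β * lam ^ 2 / (β + lam) ^ 2
        + t ^ 2 * lam ^ 3 / (β + lam)
        + (2 * β * lam ^ 2 / (β + lam) ^ 3) * Real.exp (-(t * (β + lam))))
    (hBββ : Bββ = 2 * β * lam ^ 2 * (β - 2 * lam) / (β + lam) ^ 4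
        + 4 * t * β * lam ^ 3 / (β + lam) ^ 3
        + t ^ 2 * lam ^ 4 / (β + lam) ^ 2
        - (2 * β * lam ^ 2 * (-(2 * lam) + β * (1 + t * (β + lam))) / (β + lam) ^ 4) *
            Real.exp (-(t * (β + lam)))) :
    lam ^ 2 *
        ∫ y in (0:ℝ)..t,
          ∫ v in (0:ℝ)..(t - y),
            Real.exp (-(lam * (y + v))) * m y * m v * ((lam * (t - y - v) + 2) ^ 2 - 2)
      = μl ^ 2 * (B00 - 2 * B0β + Bββ) + 2 * μl * μs * (B0β - Bββ) + μs ^ 2 * Bββ :=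
  stmt_11_general t lam β μl μs (by positivity) m hm B00 B0β Bββ hB00 hB0β hBββ
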